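/- For every partial recursive function f : ℕ →. ℕ (with values in Part ℕ) there exists a partial recursive function g : ℕ →. ℕ that is a middle inverse of f, i.e. for every a : ℕ one has (f a).bind (fun b => (g b).bind f) = f a (the composite partial map f ∘ g ∘ f equals f). -/

import Mathlib

/-- A partial recursive function has a partial recursive right inverse, defined exactly on
its range. -/
theorem exists_partrec_rightInverse_on_range {f : ℕ →. ℕ} (hf : Nat.Partrec f) :
    ∃ g : ℕ →. ℕ, Nat.Partrec g ∧ (∀ b, ∀ x ∈ g b, b ∈ f x) ∧
      ∀ b, (g b).Dom ↔ ∃ a, b ∈ f a := by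
  obtain ⟨c, rfl⟩ := Nat.Partrec.Code.exists_code.1 hf
  -- Dovetail: `n` codes a step bound together with a candidate preimage.
  let search : ℕ → ℕ → Option ℕ := fun b n =>
    if Nat.Partrec.Code.evaln n.unpair.1 c n.unpair.2 = some b then some n.unpair.2 else none
  have mem_search {b n x : ℕ} : x ∈ search b n ↔
      Nat.Partrec.Code.evaln n.unpair.1 c n.unpair.2 = some b ∧ n.unpair.2 = x := by
    simp [search]
  have hsearch : Primrec₂ search := by
    have hunpair : Primrec fun p : ℕ × ℕ => p.2.unpair := Primrec.unpair.comp Primrec.snd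
    have heval : Primrec fun p : ℕ × ℕ =>
        Nat.Partrec.Code.evaln p.2.unpair.1 c p.2.unpair.2 :=
      Nat.Partrec.Code.primrec_evaln.comp
        (((Primrec.fst.comp hunpair).pair (Primrec.const c)).pair (Primrec.snd.comp hunpair))
    exact Primrec.ite (Primrec.eq.comp heval (Primrec.option_some.comp Primrec.fst))
      (Primrec.option_some.comp (Primrec.snd.comp hunpair)) (Primrec.const none)
  have sound : ∀ b, ∀ x ∈ Nat.rfindOpt (search b), b ∈ c.eval x := by
    intro b x hx
    obtain ⟨n, hn⟩ := Nat.rfindOpt_spec hx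
    obtain ⟨hb, rfl⟩ := mem_search.1 hn
    exact Nat.Partrec.Code.evaln_sound hb
  refine ⟨fun b => Nat.rfindOpt (search b),
    Partrec.nat_iff.1 (Partrec.rfindOpt hsearch.to_comp), sound, fun b => ⟨fun h => ?_, ?_⟩⟩
  · exact ⟨_, sound b _ (Part.get_mem h)⟩
  · rintro ⟨a, ha⟩
    obtain ⟨k, hk⟩ := Nat.Partrec.Code.evaln_complete.1 ha
    exact Nat.rfindOpt_dom.2 ⟨Nat.pair k a, a, mem_search.2 (by simpa using hk)⟩

/-- For every partial recursive function `f : ℕ →. ℕ` there exists a partial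
recursive function `g : ℕ →. ℕ` that is a middle inverse of `f`:
the composite partial map `f ∘ g ∘ f` equals `f`. -/
theorem partrec_middle_inverse (f : ℕ →. ℕ) (hf : Nat.Partrec f) :
    ∃ g : ℕ →. ℕ, Nat.Partrec g ∧
      ∀ a : ℕ, (f a).bind (fun b => (g b).bind f) = f a := by
  obtain ⟨g, hg, sound, dom⟩ := exists_partrec_rightInverse_on_range hf
  refine ⟨g, hg, fun a => Part.ext fun y => ?_⟩
  constructor
  · intro h
    obtain ⟨b, hb, h⟩ := Part.mem_bind_iff.1 h
    obtain ⟨x, hx, hy⟩ := Part.mem_bind_iff.1 h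
    rwa [Part.mem_unique hy (sound b x hx)]
  · intro hy
    have hx := Part.get_mem ((dom y).2 ⟨a, hy⟩)
    exact Part.mem_bind hy (Part.mem_bind hx (sound y _ hx))
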